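/- There is an absolute constant c > 0 such that for every finite A ⊆ F_p with 2 ≤ |A| ≤ p^{1/2}, one has max{|A−A|, |AA|} ≥ c|A|^{13/12}. -/

import Mathlib

open Finset Pointwise

/-!
Let `P = #(A * A)` and `D = #(A - A)`. By the Plünnecke inequality a large part `S` of `A` satisfies
`#(S - 3 • S) ≪ D ^ 3 / #S ^ 2`. By Cauchy–Schwarz the multiplicative energy of `S` is at least
`#S ^ 4 / P`, so for some `b ∈ S` the dilates `a • S`, `a ∈ S`, meet `b • S` in `#S ^ 3 / P` points
in total. Hence for some `N` the set `B` of those `a` whose dilate meets `b • S` in at least `N`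
points satisfies `#B ^ 3 * N ^ 4 ≫ #S ^ 11 / P ^ 4`.

Let `R = (B - B) / (B - B)`. If `R` is closed under `ξ ↦ ξ - 1`, then it contains so many multiples
of `-1` that one of them, `ξ`, has small additive energy `E[B, ξ • B]`. Otherwise some `ξ ∈ R` has
`ξ - 1 ∉ R`, so that `x + (ξ - 1) * y` determines `x, y ∈ B`, and a sum over three different sets,
`X - Y + ξ • Y ⊇ X + (ξ - 1) • Y`, is large. In both cases `X + ξ • Y` has at least about
`#B ^ 3 / D` elements for all large parts `X, Y` of `B`. Writing `ξ = (a - b) / (c - d)`, this also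
bounds `(c - d) • X + (a - b) • Y` from below. On the other hand, a dilate by an element of `B` of a
suitable large part of `B` is covered by `D / N` translates of `b • S`, so for suitable `X, Y` that
set is covered by `(D / N) ^ 4` translates of `b • (S - 3 • S)`. Comparing the two bounds gives
`#A ^ 13 ≪ D ^ 8 * P ^ 4`.
-/

open scoped Combinatorics.Additive

section Exhaustion
variable {α : Type*} [DecidableEq α]

theorem exists_subset_not_sdiff_of_disjoint_union {C : Finset α} {P Q : Finset α → Prop}
    (h_empty : P ∅) (h_union : ∀ X Y, Disjoint X Y → P X → P Y → P (X ∪ Y))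
    (h_step : ∀ D ⊆ C, Q D → ∃ Y ⊆ D, Y.Nonempty ∧ P Y) :
    ∃ X ⊆ C, P X ∧ ¬ Q (C \ X) := by
  classical
  obtain ⟨X, hX⟩ := {X ∈ C.powerset | P X}.exists_maximal ⟨∅, by simpa using h_empty⟩
  obtain ⟨hXC, hPX⟩ := by simpa only [mem_filter, mem_powerset] using hX.prop
  refine ⟨X, hXC, hPX, fun hQ ↦ ?_⟩
  obtain ⟨Y, hYC, hY, hPY⟩ := h_step _ sdiff_subset hQ
  have hXY : Disjoint X Y := disjoint_of_subset_right hYC disjoint_sdiff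
  have hle : X ∪ Y ⊆ X := hX.le_of_ge (mem_filter.2 ⟨mem_powerset.2
    (union_subset hXC (hYC.trans sdiff_subset)), h_union X Y hXY hPX hPY⟩) subset_union_left
  exact hY.ne_empty (hXY.eq_bot_of_ge (subset_union_right.trans hle))

end Exhaustion

section Sumset
variable {G : Type*} [AddCommGroup G] [DecidableEq G]

theorem exists_subset_card_add_nsmul_le {A : Finset G} (hA : A.Nonempty) (B : Finset G) :
    ∃ X ⊆ A, X.Nonempty ∧
      ∀ n : ℕ, (#(X + n • B) : ℝ) ≤ ((#(A + B) : ℝ) / #A) ^ n * #X := by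
  obtain ⟨X, hX, hmin⟩ := exists_min_image (A.powerset.erase ∅)
    (fun X ↦ (#(X + B) : ℝ) / #X) ⟨A, by simp [hA.ne_empty]⟩
  simp only [mem_erase, mem_powerset, ← nonempty_iff_ne_empty] at hX hmin
  have hX₀ : (0 : ℝ) < #X := by exact_mod_cast hX.1.card_pos
  have hpetridis : ∀ X' ⊆ X, #(X + B) * #X' ≤ #(X' + B) * #X := by
    intro X' hX'
    obtain rfl | hne := X'.eq_empty_or_nonempty
    · simp
    have h := hmin X' ⟨hne, hX'.trans hX.2⟩
    rw [div_le_div_iff₀ hX₀ (by exact_mod_cast hne.card_pos)] at h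
    exact_mod_cast h
  refine ⟨X, hX.2, hX.1, fun n ↦ ?_⟩
  induction n with
  | zero => simp
  | succ n ih =>
    have h : (#(X + (n + 1) • B) : ℝ) * #X ≤ #(X + B) * #(X + n • B) := by
      rw [succ_nsmul, ← add_assoc, add_comm X (n • B)]
      exact_mod_cast pluennecke_petridis_inequality_add (n • B) hpetridis
    calc (#(X + (n + 1) • B) : ℝ) ≤ (#(X + B) : ℝ) / #X * #(X + n • B) := by
          rwa [div_mul_eq_mul_div, le_div_iff₀ hX₀]
      _ ≤ (#(A + B) : ℝ) / #A * (((#(A + B) : ℝ) / #A) ^ n * #X) := by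
          have hratio := hmin A ⟨hA, Subset.rfl⟩
          gcongr ?_ * ?_
      _ = ((#(A + B) : ℝ) / #A) ^ (n + 1) * #X := by ring

theorem exists_large_subset_card_add_nsmul_le (A B : Finset G) (n : ℕ) :
    ∃ X ⊆ A, #A ≤ 2 * #X ∧
      (#(X + n • B) : ℝ) ≤ (2 * (#(A + B) : ℝ) / #A) ^ n * #X := by
  set K : ℝ := 2 * (#(A + B) : ℝ) / #A with hK
  suffices ∃ X ⊆ A, (#(X + n • B) : ℝ) ≤ K ^ n * #X ∧ ¬ #A < 2 * #(A \ X) by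
    obtain ⟨X, hXA, hX, hlarge⟩ := this
    have := card_sdiff_add_card_eq_card hXA
    exact ⟨X, hXA, by omega, hX⟩
  refine exists_subset_not_sdiff_of_disjoint_union (Q := fun D ↦ #A < 2 * #D) (by simp)
    (fun X Y hXY hX hY ↦ ?_) (fun D hDA hD ↦ ?_)
  · rw [union_add, card_union_of_disjoint hXY]
    calc (#(X + n • B ∪ (Y + n • B)) : ℝ) ≤ #(X + n • B) + #(Y + n • B) := by
          exact_mod_cast card_union_le _ _
      _ ≤ K ^ n * #X + K ^ n * #Y := add_le_add hX hY
      _ = K ^ n * (#X + #Y : ℕ) := by push_cast; ring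
  · have hD₀ : 0 < #D := by omega
    have hA₀ : 0 < #A := hD₀.trans_le (card_le_card hDA)
    obtain ⟨Y, hYD, hY₀, hY⟩ := exists_subset_card_add_nsmul_le (card_pos.1 hD₀) B
    refine ⟨Y, hYD, hY₀, (hY n).trans ?_⟩
    gcongr
    rw [hK, div_le_div_iff₀ (by exact_mod_cast hD₀) (by exact_mod_cast hA₀)]
    calc (#(D + B) : ℝ) * #A ≤ #(A + B) * (2 * #D : ℕ) := by gcongr
      _ = 2 * #(A + B) * #D := by push_cast; ring

theorem exists_large_subset_card_sub_nsmul_mul_pow_le (A : Finset G) (n : ℕ) :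
    ∃ S ⊆ A, #A ≤ 2 * #S ∧ #(S - n • S) * #A ^ n ≤ (2 * #(A - A)) ^ n * #S := by
  obtain rfl | hA := A.eq_empty_or_nonempty
  · exact ⟨∅, by simp⟩
  obtain ⟨S, hSA, hAS, hS⟩ := exists_large_subset_card_add_nsmul_le A (-A) n
  refine ⟨S, hSA, hAS, ?_⟩
  have hA₀ : (0 : ℝ) < #A := by exact_mod_cast hA.card_pos
  rw [div_pow, div_mul_eq_mul_div, le_div_iff₀ (by positivity), neg_nsmul,
    ← sub_eq_add_neg, ← sub_eq_add_neg] at hS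
  calc #(S - n • S) * #A ^ n ≤ #(S - n • A) * #A ^ n := by gcongr
    _ ≤ (2 * #(A - A)) ^ n * #S := by exact_mod_cast hS

end Sumset

section DifferentSummands
variable {G : Type*} [DecidableEq G]

/-- The union of `B × 0 × K` and `C × H × 0` in `G × H × K`, in which the sizes of `H` and `K`
serve as weights balancing the contributions of `C` and `B` to its sumset with `A × 0 × 0`. -/
def weightedUnion (H K : Type*) [Zero H] [Zero K] [Fintype H] [Fintype K] [DecidableEq H]
    [DecidableEq K] (B C : Finset G) : Finset (G × H × K) :=
  B ×ˢ ({0} ×ˢ univ) ∪ C ×ˢ (univ ×ˢ {0})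

variable [AddCommGroup G] {H K : Type*} [AddCommGroup H] [AddCommGroup K] [Fintype H] [Fintype K]
  [DecidableEq H] [DecidableEq K]

theorem card_product_zero_add_weightedUnion_le (A B C : Finset G) :
    #(A ×ˢ ({0} ×ˢ {0}) + weightedUnion H K B C) ≤
      #(A + B) * Fintype.card K + #(A + C) * Fintype.card H := by
  rw [weightedUnion, add_union]
  refine (card_union_le _ _).trans_eq ?_
  simp only [product_add_product_comm, card_product, singleton_add, vadd_finset_univ]
  simp

theorem card_add_add_mul_le_card_add_two_nsmul_weightedUnion (A B C : Finset G) :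
    #(A + B + C) * (Fintype.card H * Fintype.card K) ≤
      #(A ×ˢ (({0} : Finset H) ×ˢ ({0} : Finset K)) + 2 • weightedUnion H K B C) := by
  have hsub : A ×ˢ ({0} ×ˢ {0}) + (B ×ˢ ({0} ×ˢ univ) + C ×ˢ (univ ×ˢ {0})) ⊆
      A ×ˢ (({0} : Finset H) ×ˢ ({0} : Finset K)) + 2 • weightedUnion H K B C := by
    rw [two_nsmul]
    exact add_subset_add_left (add_subset_add subset_union_left subset_union_right)
  refine le_of_eq_of_le ?_ (card_le_card hsub)
  simp only [product_add_product_comm, card_product, add_assoc]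
  simp

theorem exists_subset_card_add_add_le {A B C : Finset G} (hA : A.Nonempty) (hB : B.Nonempty)
    (hC : C.Nonempty) :
    ∃ X ⊆ A, X.Nonempty ∧ #(X + B + C) * #A ^ 2 ≤ 4 * #(A + B) * #(A + C) * #X := by
  set m := #(A + B) with hm
  set n := #(A + C) with hn
  have hm₀ : 0 < m := (hA.add hB).card_pos
  have hn₀ : 0 < n := (hA.add hC).card_pos
  have : NeZero m := ⟨hm₀.ne'⟩
  have : NeZero n := ⟨hn₀.ne'⟩
  set S := weightedUnion (ZMod m) (ZMod n) B C
  set Z : Finset (ZMod m × ZMod n) := {0} ×ˢ {0}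
  have hAS : #(A ×ˢ Z + S) ≤ 2 * m * n :=
    (card_product_zero_add_weightedUnion_le A B C).trans_eq <| by
      rw [ZMod.card, ZMod.card, ← hm, ← hn]
      ring
  obtain ⟨Y, hYA, hY₀, hY⟩ := exists_subset_card_add_nsmul_le (A := A ×ˢ Z)
    (hA.product (by simp [Z])) S
  obtain ⟨X, hXA, rfl⟩ : ∃ X ⊆ A, Y = X ×ˢ Z := by
    simp only [Z, singleton_product_singleton] at hYA ⊢
    simpa only [product_singleton, subset_map_iff] using hYA
  refine ⟨X, hXA, hY₀.fst, ?_⟩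
  have hX : #(X ×ˢ Z + 2 • S) * #A ^ 2 ≤ (2 * m * n) ^ 2 * #X := by
    have hA₀ : (0 : ℝ) < #A := by exact_mod_cast hA.card_pos
    have hY₂ := hY 2
    simp only [card_product, Z, card_singleton, mul_one] at hY₂
    rw [div_pow, div_mul_eq_mul_div, le_div_iff₀ (by positivity)] at hY₂
    have : (#(X ×ˢ Z + 2 • S) : ℝ) * #A ^ 2 ≤ (2 * m * n : ℕ) ^ 2 * #X := hY₂.trans (by gcongr)
    exact_mod_cast this
  refine Nat.le_of_mul_le_mul_left ?_ (Nat.mul_pos hm₀ hn₀)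
  calc m * n * (#(X + B + C) * #A ^ 2)
      = #(X + B + C) * (Fintype.card (ZMod m) * Fintype.card (ZMod n)) * #A ^ 2 := by
        rw [ZMod.card, ZMod.card]
        ring
    _ ≤ #(X ×ˢ Z + 2 • S) * #A ^ 2 := by
        gcongr
        exact card_add_add_mul_le_card_add_two_nsmul_weightedUnion X B C
    _ ≤ (2 * m * n) ^ 2 * #X := hX
    _ = m * n * (4 * m * n * #X) := by ring

end DifferentSummands

section Covering
variable {G : Type*} [AddCommGroup G] [DecidableEq G]

theorem addEnergy_neg_right (A B : Finset G) : E[A, -B] = E[A, B] := by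
  refine card_equiv ((Equiv.refl _).prodCongr
    ((Equiv.prodComm _ _).trans ((Equiv.neg G).prodCongr (Equiv.neg G)))) ?_
  rintro ⟨⟨a₁, a₂⟩, b₁, b₂⟩
  simp [← sub_eq_add_neg, sub_eq_sub_iff_add_eq_add, and_comm (a := -b₁ ∈ B)]

theorem exists_addEnergy_le_mul_addConvolution (A B : Finset G) :
    ∃ t, E[A, B] ≤ #A * #B * A.addConvolution B t := by
  obtain h | h := (A + B).eq_empty_or_nonempty
  · exact ⟨0, by simp [addEnergy_eq_sum_sq', h]⟩
  obtain ⟨t, -, ht⟩ := exists_max_image (A + B) (A.addConvolution B) h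
  have hsum : ∑ u ∈ A + B, A.addConvolution B u = #A * #B := by
    rw [← card_product]
    exact (card_eq_sum_card_fiberwise fun x hx ↦
      add_mem_add (mem_product.1 hx).1 (mem_product.1 hx).2).symm
  refine ⟨t, ?_⟩
  calc E[A, B] = ∑ u ∈ A + B, A.addConvolution B u * A.addConvolution B u := by
        simp only [addEnergy_eq_sum_sq', sq, addConvolution]
    _ ≤ ∑ u ∈ A + B, A.addConvolution B u * A.addConvolution B t :=
        sum_le_sum fun u hu ↦ Nat.mul_le_mul_left _ (ht u hu)
    _ = #A * #B * A.addConvolution B t := by rw [← sum_mul, hsum]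

theorem exists_card_mul_card_le_card_sub_mul_card_inter (C : Finset G) {V W : Finset G}
    (hW : W = V ∨ W = -V) : ∃ t : G, #C * #V ≤ #(C - V) * #(C ∩ (t +ᵥ W)) := by
  obtain ⟨t, ht⟩ := exists_addEnergy_le_mul_addConvolution C (-W)
  rw [← card_inter_vadd] at ht
  have hE : E[C, -W] = E[C, -V] := by obtain rfl | rfl := hW <;> simp [addEnergy_neg_right]
  have hWV : #(-W) = #V := by obtain rfl | rfl := hW <;> simp
  refine ⟨t, ?_⟩
  obtain h₀ | h₀ := (#C * #V).eq_zero_or_pos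
  · simp [h₀]
  refine Nat.le_of_mul_le_mul_left ?_ h₀
  calc #C * #V * (#C * #V) = #C ^ 2 * #(-V) ^ 2 := by rw [card_neg]; ring
    _ ≤ #(C + -V) * E[C, -V] := le_card_add_mul_addEnergy _ _
    _ ≤ #(C - V) * (#C * #V * #(C ∩ (t +ᵥ W))) := by
        rw [← sub_eq_add_neg, ← hE, ← hWV]
        gcongr
    _ = #C * #V * (#(C - V) * #(C ∩ (t +ᵥ W))) := by ring

theorem exists_subset_subset_add (C : Finset G) {V W : Finset G} (hV : V.Nonempty)
    (hW : W = V ∨ W = -V) :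
    ∃ D ⊆ C, ∃ T : Finset G, 3 * #C ≤ 4 * #D ∧ D ⊆ T + W ∧ #T * #V ≤ 4 * #(C - V) := by
  obtain rfl | hC := C.eq_empty_or_nonempty
  · exact ⟨∅, by simp, ∅, by simp⟩
  suffices ∃ D ⊆ C, (∃ T : Finset G, D ⊆ T + W ∧ #T * (#C * #V) ≤ 4 * #(C - V) * #D) ∧
      ¬ #C < 4 * #(C \ D) by
    obtain ⟨D, hDC, ⟨T, hDT, hT⟩, hD⟩ := this
    have := card_sdiff_add_card_eq_card hDC
    refine ⟨D, hDC, T, by omega, hDT, Nat.le_of_mul_le_mul_left ?_ hC.card_pos⟩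
    calc #C * (#T * #V) = #T * (#C * #V) := by ring
      _ ≤ 4 * #(C - V) * #C := hT.trans (by gcongr)
      _ = #C * (4 * #(C - V)) := by ring
  refine exists_subset_not_sdiff_of_disjoint_union (Q := fun D ↦ #C < 4 * #D) ⟨∅, by simp⟩ ?_ ?_
  · rintro X Y hXY ⟨T₁, hX, hT₁⟩ ⟨T₂, hY, hT₂⟩
    refine ⟨T₁ ∪ T₂, union_add (s₁ := T₁) ▸ union_subset_union hX hY, ?_⟩
    rw [card_union_of_disjoint hXY, mul_add]
    calc #(T₁ ∪ T₂) * (#C * #V) ≤ (#T₁ + #T₂) * (#C * #V) := by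
          gcongr
          exact card_union_le _ _
      _ ≤ 4 * #(C - V) * #X + 4 * #(C - V) * #Y := by rw [add_mul]; exact add_le_add hT₁ hT₂
  · intro D hDC hD
    obtain ⟨t, ht⟩ := exists_card_mul_card_le_card_sub_mul_card_inter D hW
    have hDV : 0 < #D * #V := Nat.mul_pos (by omega) hV.card_pos
    refine ⟨D ∩ (t +ᵥ W), inter_subset_left,
      card_pos.1 (Nat.pos_of_mul_pos_left (hDV.trans_le ht)),
      {t}, by rw [singleton_add]; exact inter_subset_right, ?_⟩
    calc #{t} * (#C * #V) ≤ 4 * (#D * #V) := by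
          rw [card_singleton, one_mul, ← mul_assoc]
          gcongr
      _ ≤ 4 * (#(D - V) * #(D ∩ (t +ᵥ W))) := by gcongr
      _ ≤ 4 * #(C - V) * #(D ∩ (t +ᵥ W)) := by rw [mul_assoc]; gcongr

end Covering

section Dilates
variable {F : Type*} [Field F] [DecidableEq F] {A B C U W : Finset F} {N : ℕ}

theorem exists_subset_smul_subset_add {a : F} (hCA : C ⊆ A) (hN₀ : 0 < N)
    (hN : N ≤ #{x ∈ A | a * x ∈ U}) (hW : W = U ∨ W = -U) :
    ∃ D ⊆ C, ∃ T : Finset F, 3 * #C ≤ 4 * #D ∧ a • D ⊆ T + W ∧ #T * N ≤ 4 * #(A - A) := by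
  set V := {x ∈ A | a * x ∈ U}
  have haV : a • V ⊆ U := image_subset_iff.2 fun x hx ↦ (mem_filter.1 hx).2
  obtain ⟨W₀, hW₀, haW₀⟩ : ∃ W₀, (W₀ = V ∨ W₀ = -V) ∧ a • W₀ ⊆ W := by
    obtain rfl | rfl := hW
    · exact ⟨V, .inl rfl, haV⟩
    · exact ⟨-V, .inr rfl, smul_finset_neg a V ▸ neg_subset_neg haV⟩
  obtain ⟨D, hDC, T, hCD, hDT, hT⟩ :=
    exists_subset_subset_add C (card_pos.1 (hN₀.trans_le hN)) hW₀
  refine ⟨D, hDC, a • T, hCD, ?_, ?_⟩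
  · calc a • D ⊆ a • (T + W₀) := smul_finset_subset_smul_finset hDT
      _ = a • T + a • W₀ := by rw [smul_add]
      _ ⊆ a • T + W := add_subset_add_left haW₀
  · calc #(a • T) * N ≤ #T * #V := Nat.mul_le_mul card_smul_finset_le hN
      _ ≤ 4 * #(C - V) := hT
      _ ≤ 4 * #(A - A) := by
        gcongr
        exact filter_subset _ _

theorem exists_subset_sub_smul_subset_add {c d : F} (hBA : B ⊆ A) (hN₀ : 0 < N)
    (hc : N ≤ #{x ∈ A | c * x ∈ U}) (hd : N ≤ #{x ∈ A | d * x ∈ U}) (hW : W = U ∨ W = -U) :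
    ∃ X ⊆ B, ∃ T : Finset F, #B ≤ 2 * #X ∧ (c - d) • X ⊆ T + (W - U) ∧
      #T * N ^ 2 ≤ 16 * #(A - A) ^ 2 := by
  obtain ⟨Y, hYB, T₁, hBY, hcY, hT₁⟩ := exists_subset_smul_subset_add hBA hN₀ hc hW
  obtain ⟨X, hXY, T₂, hYX, hdX, hT₂⟩ :=
    exists_subset_smul_subset_add (hYB.trans hBA) hN₀ hd (.inl rfl)
  refine ⟨X, hXY.trans hYB, T₁ - T₂, by omega, ?_, ?_⟩
  · calc (c - d) • X ⊆ c • X - d • X := by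
          refine image_subset_iff.2 fun x hx ↦ ?_
          rw [sub_smul]
          exact sub_mem_sub (smul_mem_smul_finset hx) (smul_mem_smul_finset hx)
      _ ⊆ T₁ + W - (T₂ + U) :=
          sub_subset_sub ((smul_finset_subset_smul_finset hXY).trans hcY) hdX
      _ = T₁ - T₂ + (W - U) := by rw [add_sub_add_comm]
  · calc #(T₁ - T₂) * N ^ 2 ≤ #T₁ * #T₂ * N ^ 2 := by
          gcongr
          exact card_sub_le
      _ = #T₁ * N * (#T₂ * N) := by ring
      _ ≤ 4 * #(A - A) * (4 * #(A - A)) := Nat.mul_le_mul hT₁ hT₂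
      _ = 16 * #(A - A) ^ 2 := by ring

theorem exists_subsets_card_smul_add_smul_le (hBA : B ⊆ A) (hN₀ : 0 < N)
    (hN : ∀ a ∈ B, N ≤ #{x ∈ A | a * x ∈ U}) {a b c d : F} (ha : a ∈ B) (hb : b ∈ B)
    (hc : c ∈ B) (hd : d ∈ B) :
    ∃ X ⊆ B, ∃ Y ⊆ B, #B ≤ 2 * #X ∧ #B ≤ 2 * #Y ∧
      #((c - d) • X + (a - b) • Y) * N ^ 4 ≤ 256 * #(A - A) ^ 4 * #(U - 3 • U) := by
  obtain ⟨X, hXB, T₁, hBX, hX, hT₁⟩ :=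
    exists_subset_sub_smul_subset_add hBA hN₀ (hN c hc) (hN d hd) (.inr rfl)
  obtain ⟨Y, hYB, T₂, hBY, hY, hT₂⟩ :=
    exists_subset_sub_smul_subset_add hBA hN₀ (hN a ha) (hN b hb) (.inl rfl)
  refine ⟨X, hXB, Y, hYB, hBX, hBY, ?_⟩
  have hsub : (c - d) • X + (a - b) • Y ⊆ T₁ + T₂ + (U - 3 • U) :=
    calc (c - d) • X + (a - b) • Y ⊆ T₁ + (-U - U) + (T₂ + (U - U)) := add_subset_add hX hY
      _ = T₁ + T₂ + (U - 3 • U) := by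
        rw [add_add_add_comm, succ_nsmul', two_nsmul]
        simp only [sub_eq_add_neg, neg_add]
        congr 1
        ac_rfl
  calc #((c - d) • X + (a - b) • Y) * N ^ 4 ≤ #T₁ * #T₂ * #(U - 3 • U) * N ^ 4 := by
        gcongr
        exact (card_le_card hsub).trans (card_add_le.trans (by gcongr; exact card_add_le))
    _ = #T₁ * N ^ 2 * (#T₂ * N ^ 2) * #(U - 3 • U) := by ring
    _ ≤ 16 * #(A - A) ^ 2 * (16 * #(A - A) ^ 2) * #(U - 3 • U) := by gcongr
    _ = 256 * #(A - A) ^ 4 * #(U - 3 • U) := by ring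

end Dilates

section Expansion
variable {F : Type*} [Field F] [DecidableEq F] {B X Y Ξ : Finset F} {ξ : F}

theorem card_add_smul_of_notMem_div (hξ : ξ ∉ (X - X) / (Y - Y)) :
    #(X + ξ • Y) = #X * #Y := by
  have himage : X + ξ • Y = (X ×ˢ Y).image fun p ↦ p.1 + ξ * p.2 := by
    ext
    simp [mem_add, mem_smul_finset, and_assoc]
  rw [himage, card_image_of_injOn, card_product]
  rintro ⟨x, y⟩ hxy ⟨x', y'⟩ hxy' h
  simp only [coe_product, Set.mem_prod, mem_coe] at hxy hxy' h
  obtain rfl | hy := eq_or_ne y y'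
  · rw [add_right_cancel h]
  · have hdiv : ξ = (x' - x) / (y - y') := by
      rw [eq_div_iff (sub_ne_zero.2 hy)]
      linear_combination h
    exact absurd (hdiv ▸ div_mem_div (sub_mem_sub hxy'.1 hxy.1) (sub_mem_sub hxy.2 hxy'.2)) hξ

theorem card_mul_card_sq_le_of_sub_one_notMem_div (hξ : ξ - 1 ∉ (X - X) / (Y - Y)) :
    #Y * #X ^ 2 ≤ 4 * #(X - Y) * #(X + ξ • Y) := by
  obtain rfl | hX := X.eq_empty_or_nonempty
  · simp
  obtain rfl | hY := Y.eq_empty_or_nonempty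
  · simp
  obtain ⟨Z, hZX, hZ, hcard⟩ := exists_subset_card_add_add_le hX hY.neg (hY.smul_finset (a := ξ))
  rw [← sub_eq_add_neg, ← sub_eq_add_neg] at hcard
  have hξZ : ξ - 1 ∉ (Z - Z) / (Y - Y) :=
    fun h ↦ hξ (div_subset_div_right (sub_subset_sub hZX hZX) h)
  have hZY : #Z * #Y ≤ #(Z - Y + ξ • Y) := by
    rw [← card_add_smul_of_notMem_div hξZ]
    refine card_le_card (add_subset_iff.2 fun z hz w hw ↦ ?_)
    obtain ⟨y, hy, rfl⟩ := mem_smul_finset.1 hw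
    rw [sub_smul, one_smul, add_sub_left_comm]
    exact add_comm (z - y) _ ▸ add_mem_add (sub_mem_sub hz hy) (smul_mem_smul_finset hy)
  refine Nat.le_of_mul_le_mul_left ?_ hZ.card_pos
  calc #Z * (#Y * #X ^ 2) = #Z * #Y * #X ^ 2 := by ring
    _ ≤ #(Z - Y + ξ • Y) * #X ^ 2 := by gcongr
    _ ≤ #Z * (4 * #(X - Y) * #(X + ξ • Y)) := by rwa [mul_comm #Z]

theorem addEnergy_smul_le (hξ : ξ ≠ 0) (X Y : Finset F) :
    E[X, ξ • Y] ≤ #X * #Y +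
      #{q ∈ X.offDiag ×ˢ Y.offDiag | (q.1.1 - q.1.2) / (q.2.2 - q.2.1) = ξ} := by
  set S := {q ∈ X.offDiag ×ˢ Y.offDiag | (q.1.1 - q.1.2) / (q.2.2 - q.2.1) = ξ} with hS
  have hsub : {x ∈ (X ×ˢ X) ×ˢ (ξ • Y) ×ˢ (ξ • Y) | x.1.1 + x.2.1 = x.1.2 + x.2.2} ⊆
      (X ×ˢ Y).image (fun p ↦ ((p.1, p.1), (ξ * p.2, ξ * p.2))) ∪
        S.image (fun q ↦ (q.1, (ξ * q.2.1, ξ * q.2.2))) := by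
    rintro ⟨⟨x, x'⟩, _, _⟩ h
    simp only [mem_filter, mem_product, mem_smul_finset, smul_eq_mul] at h
    obtain ⟨⟨⟨hx, hx'⟩, ⟨y, hy, rfl⟩, y', hy', rfl⟩, h⟩ := h
    obtain rfl | hne := eq_or_ne y y'
    · obtain rfl := add_right_cancel h
      exact mem_union_left _ (mem_image.2 ⟨(x, y), mem_product.2 ⟨hx, hy⟩, rfl⟩)
    · have hxx' : x ≠ x' := by
        rintro rfl
        exact hne (mul_left_cancel₀ hξ (add_left_cancel h))
      have hdiv : (x - x') / (y' - y) = ξ := by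
        rw [div_eq_iff (sub_ne_zero.2 hne.symm)]
        linear_combination h
      exact mem_union_right _ (mem_image.2 ⟨((x, x'), y, y'),
        by simp [hS, hx, hx', hxx', hy, hy', hne, hdiv], rfl⟩)
  refine (card_le_card hsub).trans ((card_union_le _ _).trans ?_)
  rw [← card_product]
  exact add_le_add card_image_le card_image_le

theorem sum_addEnergy_smul_le (hΞ : 0 ∉ Ξ) (X Y : Finset F) :
    ∑ ξ ∈ Ξ, E[X, ξ • Y] ≤ #Ξ * (#X * #Y) + #X.offDiag * #Y.offDiag :=
  calc ∑ ξ ∈ Ξ, E[X, ξ • Y]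
      ≤ ∑ ξ ∈ Ξ, (#X * #Y +
        #{q ∈ X.offDiag ×ˢ Y.offDiag | (q.1.1 - q.1.2) / (q.2.2 - q.2.1) = ξ}) :=
        sum_le_sum fun ξ hξ ↦ addEnergy_smul_le (fun h ↦ hΞ (h ▸ hξ)) X Y
    _ ≤ #Ξ * (#X * #Y) + #X.offDiag * #Y.offDiag := by
        rw [sum_add_distrib, sum_const, smul_eq_mul, sum_card_fiberwise_eq_card_filter,
          ← card_product X.offDiag]
        exact Nat.add_le_add_left (card_filter_le _ _) _

theorem exists_addEnergy_smul_le (hΞ : Ξ.Nonempty) (hΞ₀ : 0 ∉ Ξ) (hB : #B.offDiag ≤ #Ξ) :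
    ∃ ξ ∈ Ξ, E[B, ξ • B] ≤ 2 * #B ^ 2 := by
  refine exists_le_of_sum_le hΞ ((sum_addEnergy_smul_le hΞ₀ B B).trans ?_)
  have hoff : #B.offDiag ≤ #B ^ 2 := by
    rw [offDiag_card, sq]
    exact Nat.sub_le _ _
  calc #Ξ * (#B * #B) + #B.offDiag * #B.offDiag ≤ #Ξ * (#B * #B) + #Ξ * #B ^ 2 := by gcongr
    _ = ∑ ξ ∈ Ξ, 2 * #B ^ 2 := by
      rw [sum_const, smul_eq_mul]
      ring

theorem card_sq_mul_card_sq_le_of_addEnergy_smul_le {M : ℕ} (hE : E[B, ξ • B] ≤ M) (hXB : X ⊆ B)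
    (hYB : Y ⊆ B) (hξ : ξ ≠ 0) : #X ^ 2 * #Y ^ 2 ≤ M * #(X + ξ • Y) :=
  calc #X ^ 2 * #Y ^ 2 = #X ^ 2 * #(ξ • Y) ^ 2 := by rw [card_smul_finset₀ hξ]
    _ ≤ #(X + ξ • Y) * E[X, ξ • Y] := le_card_add_mul_addEnergy _ _
    _ ≤ #(X + ξ • Y) * E[B, ξ • B] := by
        gcongr
    _ ≤ M * #(X + ξ • Y) := by
        rw [mul_comm]
        gcongr

theorem neg_natCast_mem_of_forall_sub_one_mem {R : Type*} [Ring R] {S : Set R} (h₀ : 0 ∈ S)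
    (h : ∀ ξ ∈ S, ξ - 1 ∈ S) (n : ℕ) : -(n : R) ∈ S := by
  induction n with
  | zero => simpa using h₀
  | succ n ih => simpa [sub_eq_add_neg, add_comm] using h _ ih

theorem exists_mem_div_card_pow_four_le (hB : 1 < #B)
    (hinj : Set.InjOn (Nat.cast : ℕ → F) (Set.Iio (#B ^ 2)))
    (hclosed : ∀ ξ ∈ (B - B) / (B - B), ξ - 1 ∈ (B - B) / (B - B)) :
    ∃ ξ ∈ (B - B) / (B - B), ξ ≠ 0 ∧ ∀ X ⊆ B, ∀ Y ⊆ B,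
      #X ^ 2 * #Y ^ 2 ≤ 2 * #B ^ 2 * #(X + ξ • Y) := by
  obtain ⟨b, hb⟩ := card_pos.1 (zero_lt_one.trans hB)
  have h₀ : (0 : F) ∈ (B - B) / (B - B) := by
    simpa using div_mem_div (sub_mem_sub hb hb) (sub_mem_sub hb hb)
  have hlt : 1 < #B ^ 2 := Nat.one_lt_pow two_ne_zero hB
  set Ξ : Finset F := (Ioo 0 (#B ^ 2)).image fun n : ℕ ↦ -(n : F)
  have hΞ : #Ξ = #B ^ 2 - 1 := by
    rw [card_image_of_injOn, Nat.card_Ioo, Nat.sub_zero]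
    exact fun m hm n hn h ↦ hinj (mem_Ioo.1 hm).2 (mem_Ioo.1 hn).2 (neg_injective h)
  have hΞ₀ : 0 ∉ Ξ := by
    intro h
    obtain ⟨n, hn, hn₀⟩ := mem_image.1 h
    rw [mem_Ioo] at hn
    exact hn.1.ne' (hinj hn.2 (Set.mem_Iio.2 (by omega)) (by simpa using hn₀))
  obtain ⟨ξ, hξ, hE⟩ := exists_addEnergy_smul_le (B := B) (card_pos.1 (by omega)) hΞ₀ <| by
    rw [hΞ, offDiag_card, sq]
    omega
  obtain ⟨n, -, rfl⟩ := mem_image.1 hξ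
  exact ⟨_, mem_coe.1 (neg_natCast_mem_of_forall_sub_one_mem h₀ hclosed n),
    fun h ↦ hΞ₀ (h ▸ hξ),
    fun X hX Y hY ↦ card_sq_mul_card_sq_le_of_addEnergy_smul_le hE hX hY fun h ↦ hΞ₀ (h ▸ hξ)⟩

theorem exists_mem_div_card_mul_card_sq_le (hB : 1 < #B)
    (hclosed : ¬ ∀ ξ ∈ (B - B) / (B - B), ξ - 1 ∈ (B - B) / (B - B)) :
    ∃ ξ ∈ (B - B) / (B - B), ξ ≠ 0 ∧ ∀ X ⊆ B, ∀ Y ⊆ B,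
      #Y * #X ^ 2 ≤ 4 * #(B - B) * #(X + ξ • Y) := by
  push Not at hclosed
  obtain ⟨ξ, hξ, hξ₁⟩ := hclosed
  refine ⟨ξ, hξ, ?_, fun X hX Y hY ↦ ?_⟩
  · rintro rfl
    obtain ⟨a, ha, b, hb, hab⟩ := one_lt_card.1 hB
    refine hξ₁ (mem_div.2 ⟨a - b, sub_mem_sub ha hb, b - a, sub_mem_sub hb ha, ?_⟩)
    rw [div_eq_iff (sub_ne_zero.2 hab.symm)]
    ring
  · have hXY : ξ - 1 ∉ (X - X) / (Y - Y) :=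
      fun h ↦ hξ₁ (div_subset_div (sub_subset_sub hX hX) (sub_subset_sub hY hY) h)
    exact (card_mul_card_sq_le_of_sub_one_notMem_div hXY).trans (by gcongr)

theorem exists_mem_div_card_pow_three_le (hB : 1 < #B)
    (hinj : Set.InjOn (Nat.cast : ℕ → F) (Set.Iio (#B ^ 2))) :
    ∃ ξ ∈ (B - B) / (B - B), ξ ≠ 0 ∧ ∀ X ⊆ B, ∀ Y ⊆ B, #B ≤ 2 * #X → #B ≤ 2 * #Y →
      #B ^ 3 ≤ 32 * #(B - B) * #(X + ξ • Y) := by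
  have hB₀ : 0 < #B := zero_lt_one.trans hB
  by_cases hclosed : ∀ ξ ∈ (B - B) / (B - B), ξ - 1 ∈ (B - B) / (B - B)
  · obtain ⟨ξ, hξ, hξ₀, h⟩ := exists_mem_div_card_pow_four_le hB hinj hclosed
    refine ⟨ξ, hξ, hξ₀, fun X hX Y hY hBX hBY ↦ ?_⟩
    have hsq : #B ^ 2 ≤ 32 * #(X + ξ • Y) := by
      refine Nat.le_of_mul_le_mul_left ?_ (pow_pos hB₀ 2)
      calc #B ^ 2 * #B ^ 2 ≤ (2 * #X) ^ 2 * (2 * #Y) ^ 2 := by gcongr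
        _ = 16 * (#X ^ 2 * #Y ^ 2) := by ring
        _ ≤ 16 * (2 * #B ^ 2 * #(X + ξ • Y)) := Nat.mul_le_mul_left _ (h X hX Y hY)
        _ = #B ^ 2 * (32 * #(X + ξ • Y)) := by ring
    calc #B ^ 3 = #B * #B ^ 2 := by ring
      _ ≤ #(B - B) * (32 * #(X + ξ • Y)) :=
          Nat.mul_le_mul (card_le_card_sub_right (card_pos.1 hB₀)) hsq
      _ = 32 * #(B - B) * #(X + ξ • Y) := by ring
  · obtain ⟨ξ, hξ, hξ₀, h⟩ := exists_mem_div_card_mul_card_sq_le hB hclosed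
    refine ⟨ξ, hξ, hξ₀, fun X hX Y hY hBX hBY ↦ ?_⟩
    calc #B ^ 3 = #B * #B ^ 2 := by ring
      _ ≤ 2 * #Y * (2 * #X) ^ 2 := by gcongr
      _ = 8 * (#Y * #X ^ 2) := by ring
      _ ≤ 8 * (4 * #(B - B) * #(X + ξ • Y)) := Nat.mul_le_mul_left _ (h X hX Y hY)
      _ = 32 * #(B - B) * #(X + ξ • Y) := by ring

theorem exists_card_pow_three_le (hB : B.Nonempty)
    (hinj : Set.InjOn (Nat.cast : ℕ → F) (Set.Iio (#B ^ 2))) :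
    ∃ a ∈ B, ∃ b ∈ B, ∃ c ∈ B, ∃ d ∈ B, ∀ X ⊆ B, ∀ Y ⊆ B, #B ≤ 2 * #X → #B ≤ 2 * #Y →
      #B ^ 3 ≤ 32 * #(B - B) * #((c - d) • X + (a - b) • Y) := by
  obtain h₁ | h₁ := (Nat.one_le_iff_ne_zero.2 hB.card_ne_zero).eq_or_lt
  · obtain ⟨b, hb⟩ := hB
    refine ⟨b, hb, b, hb, b, hb, b, hb, fun X _ Y _ hBX hBY ↦ ?_⟩
    have hX : X.Nonempty := card_pos.1 (by omega)
    have hY : Y.Nonempty := card_pos.1 (by omega)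
    have hBB : 0 < #(B - B) := (Nonempty.sub ⟨b, hb⟩ ⟨b, hb⟩).card_pos
    have hXY : 0 < #((b - b) • X + (b - b) • Y) := (hX.smul_finset.add hY.smul_finset).card_pos
    rw [← h₁, one_pow]
    exact Nat.mul_pos (Nat.mul_pos (by norm_num) hBB) hXY
  · obtain ⟨ξ, hξ, hξ₀, h⟩ := exists_mem_div_card_pow_three_le h₁ hinj
    obtain ⟨_, hu, _, hv, rfl⟩ := mem_div.1 hξ
    obtain ⟨a, ha, b, hb, rfl⟩ := mem_sub.1 hu
    obtain ⟨c, hc, d, hd, rfl⟩ := mem_sub.1 hv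
    have hcd : c - d ≠ 0 := (div_ne_zero_iff.1 hξ₀).2
    refine ⟨a, ha, b, hb, c, hc, d, hd, fun X hX Y hY hBX hBY ↦ ?_⟩
    have hscale : (c - d) • X + (a - b) • Y = (c - d) • (X + ((a - b) / (c - d)) • Y) := by
      rw [smul_add, smul_smul, mul_div_cancel₀ _ hcd]
    rw [hscale, card_smul_finset₀ hcd]
    exact h X hX Y hY hBX hBY

end Expansion

section RichDilates
variable {F : Type*} [Field F] [DecidableEq F] {A B U : Finset F} {N : ℕ}

theorem card_pow_three_mul_pow_four_le_of_forall_le_card_filter (hBA : B ⊆ A)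
    (hinj : Set.InjOn (Nat.cast : ℕ → F) (Set.Iio (#B ^ 2)))
    (hN : ∀ a ∈ B, N ≤ #{x ∈ A | a * x ∈ U}) :
    #B ^ 3 * N ^ 4 ≤ 2 ^ 13 * #(A - A) ^ 5 * #(U - 3 • U) := by
  obtain rfl | hB := B.eq_empty_or_nonempty
  · simp
  obtain rfl | hN₀ := N.eq_zero_or_pos
  · simp
  obtain ⟨a, ha, b, hb, c, hc, d, hd, hgrow⟩ := exists_card_pow_three_le hB hinj
  obtain ⟨X, hX, Y, hY, hBX, hBY, hcover⟩ :=
    exists_subsets_card_smul_add_smul_le hBA hN₀ hN ha hb hc hd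
  set Z := (c - d) • X + (a - b) • Y
  calc #B ^ 3 * N ^ 4 ≤ 32 * #(B - B) * #Z * N ^ 4 := by
        gcongr
        exact hgrow X hX Y hY hBX hBY
    _ = 32 * #(B - B) * (#Z * N ^ 4) := by ring
    _ ≤ 32 * #(A - A) * (256 * #(A - A) ^ 4 * #(U - 3 • U)) := by gcongr
    _ = 2 ^ 13 * #(A - A) ^ 5 * #(U - 3 • U) := by ring

end RichDilates

section LevelSet
variable {α : Type*} {s : Finset α} {f : α → ℝ}

theorem le_mul_rpow_inv_sub_rpow_inv {x κ t : ℝ} (k : ℕ) (hκ : 0 ≤ κ) (ht : 0 ≤ t)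
    (h : x ^ (k + 1) * (t + 1) ^ k ≤ κ ^ (k + 1)) :
    x ≤ (k + 1) * κ * ((t + 1) ^ ((k + 1 : ℕ) : ℝ)⁻¹ - t ^ ((k + 1 : ℕ) : ℝ)⁻¹) := by
  set u := (t + 1) ^ ((k + 1 : ℕ) : ℝ)⁻¹
  set v := t ^ ((k + 1 : ℕ) : ℝ)⁻¹
  have hu : u ^ (k + 1) = t + 1 := Real.rpow_inv_natCast_pow (by positivity) k.succ_ne_zero
  have hv : v ^ (k + 1) = t := Real.rpow_inv_natCast_pow ht k.succ_ne_zero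
  have hu₀ : 0 < u := by positivity
  have hv₀ : 0 ≤ v := by positivity
  have hvu : v ≤ u := Real.rpow_le_rpow ht (by linarith) (by positivity)
  have hxu : x * u ^ k ≤ κ := by
    refine le_of_pow_le_pow_left₀ k.succ_ne_zero hκ ?_
    rwa [mul_pow, ← pow_mul, mul_comm k, pow_mul, hu]
  have huv : 1 ≤ (k + 1) * u ^ k * (u - v) := by
    have := (le_abs_self _).trans (abs_pow_sub_pow_le (a := u) (b := v) (n := k + 1))
    rw [hu, hv, abs_of_nonneg (sub_nonneg.2 hvu), abs_of_pos hu₀, abs_of_nonneg hv₀,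
      max_eq_left hvu, add_sub_cancel_left, Nat.cast_succ, Nat.add_sub_cancel] at this
    linarith
  refine le_of_mul_le_mul_right ?_ (pow_pos hu₀ k)
  calc x * u ^ k ≤ κ * 1 := by rwa [mul_one]
    _ ≤ κ * ((k + 1) * u ^ k * (u - v)) := by gcongr
    _ = (k + 1) * κ * (u - v) * u ^ k := by ring

theorem sum_le_of_forall_pow_mul_card_pow_le {κ : ℝ} (k : ℕ) (hκ : 0 ≤ κ)
    (hf : ∀ a ∈ s, 0 ≤ f a)
    (h : ∀ a ∈ s, f a ^ (k + 1) * #{b ∈ s | f a ≤ f b} ^ k ≤ κ ^ (k + 1)) :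
    ∑ a ∈ s, f a ≤ (k + 1) * κ * (#s : ℝ) ^ ((k + 1 : ℕ) : ℝ)⁻¹ := by
  classical
  -- Enumerated in decreasing order, the values satisfy `f a_i ≤ κ * i ^ (-k / (k + 1))`, and
  -- this is at most `(k + 1) * κ` times the `i`-th increment of `t ↦ t ^ (1 / (k + 1))`.
  induction s using Finset.induction_on_min_value f with
  | empty =>
    rw [sum_empty]
    positivity
  | insert a s has hmin ih =>
    have hs : ∑ b ∈ s, f b ≤ (k + 1) * κ * (#s : ℝ) ^ ((k + 1 : ℕ) : ℝ)⁻¹ := by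
      refine ih (fun b hb ↦ hf b (mem_insert_of_mem hb)) fun b hb ↦ ?_
      refine le_trans ?_ (h b (mem_insert_of_mem hb))
      have := hf b (mem_insert_of_mem hb)
      gcongr
      exact subset_insert a s
    have hlevel : {b ∈ insert a s | f a ≤ f b} = insert a s :=
      filter_true_of_mem ((forall_mem_insert _ _ _).2 ⟨le_rfl, hmin⟩)
    have ha := h a (mem_insert_self a s)
    rw [hlevel, card_insert_of_notMem has, Nat.cast_succ] at ha
    rw [sum_insert has, card_insert_of_notMem has, Nat.cast_succ]
    have hfa := le_mul_rpow_inv_sub_rpow_inv k hκ (Nat.cast_nonneg #s) ha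
    linarith

theorem exists_sum_pow_le_card_mul_pow_mul_card_pow (k : ℕ) (hs : s.Nonempty)
    (hf : ∀ a ∈ s, 0 ≤ f a) :
    ∃ a ∈ s, (∑ b ∈ s, f b) ^ (k + 1) ≤
      (k + 1) ^ (k + 1) * #s * (f a ^ (k + 1) * #{b ∈ s | f a ≤ f b} ^ k) := by
  obtain ⟨a, ha, hmax⟩ := exists_max_image s (fun a ↦ f a ^ (k + 1) * #{b ∈ s | f a ≤ f b} ^ k) hs
  refine ⟨a, ha, ?_⟩
  set M := f a ^ (k + 1) * (#{b ∈ s | f a ≤ f b} : ℝ) ^ k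
  have hM : 0 ≤ M := mul_nonneg (pow_nonneg (hf a ha) _) (by positivity)
  have hroot {x : ℝ} (hx : 0 ≤ x) : (x ^ ((k + 1 : ℕ) : ℝ)⁻¹) ^ (k + 1) = x :=
    Real.rpow_inv_natCast_pow hx k.succ_ne_zero
  calc (∑ b ∈ s, f b) ^ (k + 1)
      ≤ ((k + 1) * M ^ ((k + 1 : ℕ) : ℝ)⁻¹ * (#s : ℝ) ^ ((k + 1 : ℕ) : ℝ)⁻¹) ^ (k + 1) :=
        pow_le_pow_left₀ (sum_nonneg hf) (sum_le_of_forall_pow_mul_card_pow_le k (by positivity) hf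
          fun b hb ↦ (hroot hM).symm ▸ hmax b hb) _
    _ = (k + 1) ^ (k + 1) * #s * M := by
        rw [mul_pow, mul_pow, hroot hM, hroot (Nat.cast_nonneg _)]
        ring

end LevelSet

section Energy
variable {F : Type*} [Field F] [DecidableEq F] {S : Finset F}

theorem mulEnergy_le_sum_card_filter_mem_smul (hS : 0 ∉ S) (T : Finset F) :
    Eₘ[S, T] ≤ ∑ b ∈ S, ∑ a ∈ S, #{x ∈ T | a * x ∈ b • T} := by
  rw [mulEnergy, card_filter, sum_product, sum_product_right]
  refine sum_le_sum fun b hb ↦ sum_le_sum fun a _ ↦ ?_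
  rw [← card_filter]
  refine card_le_card_of_injOn Prod.fst (fun p hp ↦ ?_) fun p hp q hq hpq ↦ ?_
  · obtain ⟨hp, hab⟩ := mem_filter.1 hp
    rw [mem_product] at hp
    exact mem_filter.2 ⟨hp.1, mem_smul_finset.2 ⟨p.2, hp.2, hab.symm⟩⟩
  · refine Prod.ext hpq (mul_left_cancel₀ (ne_of_mem_of_not_mem hb hS) ?_)
    rw [← (mem_filter.1 hp).2, ← (mem_filter.1 hq).2, hpq]

theorem exists_card_pow_three_le_card_mul_mul_sum (hS : S.Nonempty) (hS₀ : 0 ∉ S) :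
    ∃ b ∈ S, #S ^ 3 ≤ #(S * S) * ∑ a ∈ S, #{x ∈ S | a * x ∈ b • S} := by
  obtain ⟨b, hb, hle⟩ : ∃ b ∈ S, Eₘ[S, S] ≤ #S * ∑ a ∈ S, #{x ∈ S | a * x ∈ b • S} := by
    refine exists_le_of_sum_le hS ?_
    rw [sum_const, smul_eq_mul, ← mul_sum]
    exact Nat.mul_le_mul_left _ (mulEnergy_le_sum_card_filter_mem_smul hS₀ S)
  refine ⟨b, hb, Nat.le_of_mul_le_mul_left ?_ hS.card_pos⟩
  calc #S * #S ^ 3 = #S ^ 2 * #S ^ 2 := by ring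
    _ ≤ #(S * S) * Eₘ[S, S] := le_card_mul_mul_mulEnergy S S
    _ ≤ #(S * S) * (#S * ∑ a ∈ S, #{x ∈ S | a * x ∈ b • S}) := Nat.mul_le_mul_left _ hle
    _ = #S * (#(S * S) * ∑ a ∈ S, #{x ∈ S | a * x ∈ b • S}) := by ring

end Energy

theorem injOn_natCast_Iio_of_le_charP (R : Type*) [Ring R] (p : ℕ) [CharP R p] {n : ℕ}
    (hn : p ≠ 0 → n ≤ p) : Set.InjOn (Nat.cast : ℕ → R) (Set.Iio n) := by
  obtain rfl | hp := eq_or_ne p 0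
  · have := CharP.charP_to_charZero R
    exact Nat.cast_injective.injOn
  · exact (CharP.natCast_injOn_Iio R p).mono (Set.Iio_subset_Iio (hn hp))

section SumProduct
variable {F : Type*} [Field F] [DecidableEq F] {A S : Finset F}

theorem card_pow_eleven_le_of_zero_notMem (hS : 0 ∉ S)
    (hinj : Set.InjOn (Nat.cast : ℕ → F) (Set.Iio (#S ^ 2))) :
    #S ^ 11 ≤ 2 ^ 21 * #(S * S) ^ 4 * #(S - S) ^ 5 * #(S - 3 • S) := by
  obtain rfl | hS₀ := S.eq_empty_or_nonempty
  · simp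
  obtain ⟨b, -, henergy⟩ := exists_card_pow_three_le_card_mul_mul_sum hS₀ hS
  set f : F → ℕ := fun a ↦ #{x ∈ S | a * x ∈ b • S}
  obtain ⟨a, -, hlevel⟩ : ∃ a ∈ S, (∑ x ∈ S, f x) ^ 4 ≤
      4 ^ 4 * #S * (f a ^ 4 * #{x ∈ S | f a ≤ f x} ^ 3) := by
    have := exists_sum_pow_le_card_mul_pow_mul_card_pow (f := fun a ↦ (f a : ℝ)) 3 hS₀ fun _ _ ↦
      Nat.cast_nonneg _
    simp only [Nat.cast_le] at this
    norm_num at this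
    exact_mod_cast this
  set B := {x ∈ S | f a ≤ f x}
  have hBS : B ⊆ S := filter_subset _ _
  have hrich : #B ^ 3 * f a ^ 4 ≤ 2 ^ 13 * #(S - S) ^ 5 * #(S - 3 • S) := by
    have hinjB := hinj.mono (Set.Iio_subset_Iio (show #B ^ 2 ≤ #S ^ 2 by gcongr))
    refine (card_pow_three_mul_pow_four_le_of_forall_le_card_filter hBS hinjB
      fun x hx ↦ (mem_filter.1 hx).2).trans ?_
    have hdilate : b • S - 3 • b • S = b • (S - 3 • S) := by
      rw [sub_eq_add_neg, sub_eq_add_neg, smul_add, smul_finset_neg, smul_comm]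
    rw [hdilate]
    exact Nat.mul_le_mul_left _ card_smul_finset_le
  refine Nat.le_of_mul_le_mul_left ?_ hS₀.card_pos
  calc #S * #S ^ 11 = (#S ^ 3) ^ 4 := by ring
    _ ≤ (#(S * S) * ∑ x ∈ S, f x) ^ 4 := by gcongr
    _ = #(S * S) ^ 4 * (∑ x ∈ S, f x) ^ 4 := by ring
    _ ≤ #(S * S) ^ 4 * (4 ^ 4 * #S * (f a ^ 4 * #B ^ 3)) := by gcongr
    _ = #(S * S) ^ 4 * (4 ^ 4 * #S) * (#B ^ 3 * f a ^ 4) := by ring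
    _ ≤ #(S * S) ^ 4 * (4 ^ 4 * #S) * (2 ^ 13 * #(S - S) ^ 5 * #(S - 3 • S)) := by gcongr
    _ = #S * (2 ^ 21 * #(S * S) ^ 4 * #(S - S) ^ 5 * #(S - 3 • S)) := by ring

theorem card_pow_thirteen_le_of_zero_notMem (hA : 0 ∉ A)
    (hinj : Set.InjOn (Nat.cast : ℕ → F) (Set.Iio (#A ^ 2))) :
    #A ^ 13 ≤ 2 ^ 35 * #(A - A) ^ 8 * #(A * A) ^ 4 := by
  obtain ⟨S, hSA, hAS, hS⟩ := exists_large_subset_card_sub_nsmul_mul_pow_le A 3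
  have hgrow := card_pow_eleven_le_of_zero_notMem (fun h ↦ hA (hSA h))
    (hinj.mono (Set.Iio_subset_Iio (by gcongr)))
  obtain rfl | hA₀ := A.eq_empty_or_nonempty
  · simp
  refine Nat.le_of_mul_le_mul_left ?_ hA₀.card_pos
  calc #A * #A ^ 13 = #A ^ 11 * #A ^ 3 := by ring
    _ ≤ (2 * #S) ^ 11 * #A ^ 3 := by gcongr
    _ = 2 ^ 11 * #S ^ 11 * #A ^ 3 := by ring
    _ ≤ 2 ^ 11 * (2 ^ 21 * #(S * S) ^ 4 * #(S - S) ^ 5 * #(S - 3 • S)) * #A ^ 3 := by gcongr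
    _ = 2 ^ 32 * #(S * S) ^ 4 * #(S - S) ^ 5 * (#(S - 3 • S) * #A ^ 3) := by ring
    _ ≤ 2 ^ 32 * #(A * A) ^ 4 * #(A - A) ^ 5 * ((2 * #(A - A)) ^ 3 * #A) := by
        refine Nat.mul_le_mul ?_ (hS.trans ?_) <;> gcongr
    _ = #A * (2 ^ 35 * #(A - A) ^ 8 * #(A * A) ^ 4) := by ring

theorem card_pow_thirteen_le (hA : 2 ≤ #A)
    (hinj : Set.InjOn (Nat.cast : ℕ → F) (Set.Iio (#A ^ 2))) :
    #A ^ 13 ≤ 2 ^ 48 * #(A - A) ^ 8 * #(A * A) ^ 4 := by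
  have herase : #A ≤ 2 * #(A.erase 0) := by
    have := A.pred_card_le_card_erase (a := 0)
    omega
  have hsub : A.erase 0 ⊆ A := erase_subset 0 A
  calc #A ^ 13 ≤ (2 * #(A.erase 0)) ^ 13 := by gcongr
    _ = 2 ^ 13 * #(A.erase 0) ^ 13 := by ring
    _ ≤ 2 ^ 13 * (2 ^ 35 * #(A.erase 0 - A.erase 0) ^ 8 * #(A.erase 0 * A.erase 0) ^ 4) := by
        gcongr
        exact card_pow_thirteen_le_of_zero_notMem (notMem_erase 0 A)
          (hinj.mono (Set.Iio_subset_Iio (by gcongr)))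
    _ ≤ 2 ^ 13 * (2 ^ 35 * #(A - A) ^ 8 * #(A * A) ^ 4) := by gcongr
    _ = 2 ^ 48 * #(A - A) ^ 8 * #(A * A) ^ 4 := by ring

end SumProduct

theorem difference_product_small_general {F : Type*} [Field F] [DecidableEq F] (p : ℕ) [CharP F p]
    {A : Finset F} (hA2 : 2 ≤ #A) (hA : p ≠ 0 → (#A : ℝ) ≤ √p) :
    1 / 16 * (#A : ℝ) ^ ((13 : ℝ) / 12) ≤ max (#(A - A) : ℝ) (#(A * A) : ℝ) := by
  set M := max (#(A - A) : ℝ) (#(A * A) : ℝ)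
  have hM : 0 ≤ M := le_max_of_le_left (Nat.cast_nonneg _)
  have hchar (hp : p ≠ 0) : #A ^ 2 ≤ p := by
    exact_mod_cast (Real.le_sqrt (Nat.cast_nonneg _) (Nat.cast_nonneg p)).1 (hA hp)
  have hcard : (#A : ℝ) ^ 13 ≤ 2 ^ 48 * (#(A - A) : ℝ) ^ 8 * (#(A * A) : ℝ) ^ 4 := by
    exact_mod_cast card_pow_thirteen_le hA2 (injOn_natCast_Iio_of_le_charP F p hchar)
  refine le_of_pow_le_pow_left₀ (n := 12) (by norm_num) hM ?_
  calc (1 / 16 * (#A : ℝ) ^ ((13 : ℝ) / 12)) ^ 12 = (1 / 2) ^ 48 * (#A : ℝ) ^ 13 := by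
        rw [mul_pow, ← Real.rpow_mul_natCast (Nat.cast_nonneg _), ← Real.rpow_natCast (#A : ℝ) 13]
        norm_num
    _ ≤ (1 / 2) ^ 48 * (2 ^ 48 * (#(A - A) : ℝ) ^ 8 * (#(A * A) : ℝ) ^ 4) := by gcongr
    _ = (#(A - A) : ℝ) ^ 8 * (#(A * A) : ℝ) ^ 4 := by ring
    _ ≤ M ^ 8 * M ^ 4 := by
        gcongr
        · exact le_max_left _ _
        · exact le_max_right _ _
    _ = M ^ 12 := by ring

theorem difference_product_small :
    ∃ c : ℝ, 0 < c ∧ ∀ (p : ℕ), p.Prime → ∀ A : Finset (ZMod p),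
      2 ≤ A.card → (A.card : ℝ) ≤ Real.sqrt p →
      c * (A.card : ℝ) ^ ((13 : ℝ) / 12) ≤ max ((A - A).card : ℝ) ((A * A).card : ℝ) := by
  refine ⟨1 / 16, by norm_num, fun p hp A hA2 hA ↦ ?_⟩
  have := Fact.mk hp
  exact difference_product_small_general p hA2 fun _ ↦ hA
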